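/- Let L be a Lie algebra over k and let L' be a Lie subalgebra of L. If the universal enveloping algebra U(L) is noetherian (left and right), then U(L') is also noetherian (left and right). -/

import Mathlib

/-!
Every `U(L')`-module `M` embeds in the restriction of a `U(L)`-module, namely the induced one. By
Poincaré-Birkhoff-Witt that module should be `Sym(L/L') ⊗ M`, so it is constructed there directly:
an element of `L` acts by multiplication with its class in `L/L'` plus a term of lower degree. That
term is determined recursively by requiring that, for basis vectors `x₁ ≤ ⋯ ≤ xₙ` of `L/L'`, the
monomial `x₁ ⋯ xₙ ⊗ m` is `x₁` applied to `x₂ ⋯ xₙ ⊗ m`, and by the bracket relations with `x₁`. The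
Jacobi identity shows that the result is a representation.

For a left ideal `I` of `U(L')` and `M = U(L')/I`, the annihilator in `U(L)` of the image of `1`
contains `U(L) I` and meets `U(L')` in `I`. So left ideals of `U(L')` are contracted from `U(L)`,
and a strictly ascending chain of them extends to one in `U(L)`. The antipode exchanges left and
right.
-/

section Contraction

variable {A B : Type*} [Ring A] [Ring B] {f : A →+* B}

theorem comap_map_eq_of_injective_semilinear {N : Type*} [AddCommGroup N] [Module B N]
    {I : Ideal A} {g : A ⧸ I →ₛₗ[f] N} (hg : Function.Injective g) : (I.map f).comap f = I := by
  refine le_antisymm (fun a ha ↦ ?_) Ideal.le_comap_map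
  have g_mk (a : A) : g (Submodule.Quotient.mk a) = f a • g (Submodule.Quotient.mk 1) := by
    rw [← map_smulₛₗ, ← Submodule.Quotient.mk_smul, smul_eq_mul, mul_one]
  have hle : I.map f ≤
      LinearMap.ker (LinearMap.toSpanSingleton B N (g (Submodule.Quotient.mk 1))) := by
    refine Ideal.map_le_iff_le_comap.2 fun a ha ↦ ?_
    rw [Ideal.mem_comap, LinearMap.mem_ker, LinearMap.toSpanSingleton_apply, ← g_mk,
      (Submodule.Quotient.mk_eq_zero I).2 ha, map_zero]
  rw [← Submodule.Quotient.mk_eq_zero, ← map_eq_zero_iff g hg, g_mk]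
  exact hle ha

theorem isNoetherianRing_of_comap_map_eq [IsNoetherianRing B]
    (h : ∀ I : Ideal A, (I.map f).comap f = I) : IsNoetherianRing A := by
  have hmono : StrictMono (Ideal.map f) :=
    Monotone.strictMono_of_injective (fun _ _ ↦ Ideal.map_mono) (Function.LeftInverse.injective h)
  exact isNoetherian_mk hmono.wellFoundedGT

end Contraction

section BasisOfQuotient

variable {k V W X : Type*} [Ring k] [AddCommGroup V] [Module k V] [AddCommGroup W] [Module k W]
  {N : Submodule k V} (b : Module.Basis X k (V ⧸ N))

/-- Representatives in `V` of the vectors of a basis of `V ⧸ N`; they span a complement of `N`. -/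
noncomputable def basisLift (i : X) : V := (b i).out

/-- The coordinates of a vector of `V` modulo `N`, with respect to a basis of `V ⧸ N`. -/
noncomputable def quotientCoord : V →ₗ[k] X →₀ k := b.repr.toLinearMap ∘ₗ N.mkQ

@[simp]
theorem quotientCoord_basisLift (i : X) :
    quotientCoord b (basisLift b i) = Finsupp.single i 1 := by
  simp [quotientCoord, basisLift, Submodule.Quotient.mk_out]

theorem quotientCoord_of_mem {v : V} (hv : v ∈ N) : quotientCoord b v = 0 := by
  simp [quotientCoord, (Submodule.Quotient.mk_eq_zero N).2 hv]

theorem sub_linearCombination_basisLift_mem (v : V) :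
    v - Finsupp.linearCombination k (basisLift b) (quotientCoord b v) ∈ N := by
  have hb : N.mkQ ∘ basisLift b = b := funext fun i ↦ Submodule.Quotient.mk_out (b i)
  rw [← Submodule.Quotient.mk_eq_zero, ← Submodule.mkQ_apply, map_sub,
    Finsupp.apply_linearCombination, hb]
  simp [quotientCoord]

/-- The linear endomorphism of `V` that fixes `N`, kills the representatives `basisLift b i` with
`i ∈ S` and fixes the other ones. -/
noncomputable def eraseCoords (S : Set X) : V →ₗ[k] V :=
  LinearMap.id - Finsupp.linearCombination k (S.indicator (basisLift b)) ∘ₗ quotientCoord b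

variable {b} {S : Set X}

theorem eraseCoords_of_mem {v : V} (hv : v ∈ N) : eraseCoords b S v = v := by
  simp [eraseCoords, quotientCoord_of_mem b hv]

theorem eraseCoords_basisLift_of_mem {i : X} (hi : i ∈ S) :
    eraseCoords b S (basisLift b i) = 0 := by
  simp [eraseCoords, hi]

theorem eraseCoords_basisLift_of_notMem {i : X} (hi : i ∉ S) :
    eraseCoords b S (basisLift b i) = basisLift b i := by
  simp [eraseCoords, hi]

variable (b)

theorem eraseCoords_univ_mem (v : V) : eraseCoords b Set.univ v ∈ N := by
  simpa [eraseCoords] using sub_linearCombination_basisLift_mem b v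

/-- The projection of `V` onto `N` along the span of the vectors `basisLift b i`. -/
noncomputable def basisLiftProj : V →ₗ[k] N :=
  (eraseCoords b Set.univ).codRestrict N (eraseCoords_univ_mem b)

theorem basisLiftProj_coe (v : N) : basisLiftProj b (v : V) = v :=
  Subtype.ext (eraseCoords_of_mem v.2)

theorem basisLiftProj_basisLift (i : X) : basisLiftProj b (basisLift b i) = 0 :=
  Subtype.ext (eraseCoords_basisLift_of_mem (Set.mem_univ i))

variable {b}

theorem linearMap_ext_basisLift {f g : V →ₗ[k] W} (hN : ∀ v ∈ N, f v = g v)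
    (hb : ∀ i, f (basisLift b i) = g (basisLift b i)) : f = g := by
  ext v
  have hcomp : f ∘ basisLift b = g ∘ basisLift b := funext hb
  rw [← sub_add_cancel v (Finsupp.linearCombination k (basisLift b) (quotientCoord b v)),
    map_add, map_add, hN _ (sub_linearCombination_basisLift_mem b v),
    Finsupp.apply_linearCombination, Finsupp.apply_linearCombination, hcomp]

theorem map_eraseCoords {f : V →ₗ[k] W} (hf : ∀ i ∈ S, f (basisLift b i) = 0) (v : V) :
    f (eraseCoords b S v) = f v := by
  refine LinearMap.congr_fun (f := f ∘ₗ eraseCoords b S)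
    (linearMap_ext_basisLift (b := b) (fun v hv ↦ ?_) fun i ↦ ?_) v
  · rw [LinearMap.comp_apply, eraseCoords_of_mem hv]
  · by_cases hi : i ∈ S
    · simp [eraseCoords_basisLift_of_mem hi, hf i hi]
    · simp [eraseCoords_basisLift_of_notMem hi]

theorem eraseCoords_mem {P : Submodule k V} (hN : N ≤ P) (hb : ∀ i ∉ S, basisLift b i ∈ P)
    (v : V) : eraseCoords b S v ∈ P := by
  rw [← Submodule.Quotient.mk_eq_zero, ← Submodule.mkQ_apply]
  refine LinearMap.congr_fun (f := P.mkQ ∘ₗ eraseCoords b S) (g := 0)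
    (linearMap_ext_basisLift (b := b) (fun v hv ↦ ?_) fun i ↦ ?_) v
  · simpa [eraseCoords_of_mem hv] using hN hv
  · by_cases hi : i ∈ S
    · simp [eraseCoords_basisLift_of_mem hi]
    · simpa [eraseCoords_basisLift_of_notMem hi] using hb i hi

theorem eraseCoords_eraseCoords (v : V) :
    eraseCoords b S (eraseCoords b S v) = eraseCoords b S v :=
  map_eraseCoords (fun _ hi ↦ eraseCoords_basisLift_of_mem hi) v

end BasisOfQuotient

theorem multiset_induction_on_min {X : Type*} [LinearOrder X] {p : Multiset X → Prop}
    (s : Multiset X) (zero : p 0)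
    (cons : ∀ j t, (∀ i ∈ t, j ≤ i) → (∀ u : Multiset X, u.card ≤ t.card → p u) → p (j ::ₘ t)) :
    p s := by
  induction hn : s.card using Nat.strong_induction_on generalizing s with
  | _ n ih =>
    subst hn
    have hs := s.sort_eq (· ≤ ·)
    have hsorted := s.pairwise_sort (· ≤ ·)
    generalize s.sort (· ≤ ·) = l at hs hsorted
    subst hs
    cases l with
    | nil => exact zero
    | cons j t =>
      exact cons j t (List.pairwise_cons.1 hsorted).1 fun u hu ↦
        ih u.card (by simpa using Nat.lt_succ_of_le hu) u rfl

theorem map_mem_of_mem_supported {k V W α : Type*} [Semiring k] [AddCommMonoid V] [Module k V]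
    [AddCommMonoid W] [Module k W] {s : Set α} {f : (α →₀ V) →ₗ[k] W} {S : Submodule k W}
    (h : ∀ a ∈ s, ∀ v, f (Finsupp.single a v) ∈ S) {x : α →₀ V}
    (hx : x ∈ Finsupp.supported V k s) : f x ∈ S := by
  rw [← Finsupp.sum_single x, map_finsuppSum]
  exact S.sum_mem fun a ha ↦ h a (hx ha) _

theorem map_eq_of_mem_supported {k V W α : Type*} [Semiring k] [AddCommMonoid V] [Module k V]
    [AddCommMonoid W] [Module k W] {s : Set α} {f g : (α →₀ V) →ₗ[k] W}
    (h : ∀ a ∈ s, ∀ v, f (Finsupp.single a v) = g (Finsupp.single a v)) {x : α →₀ V}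
    (hx : x ∈ Finsupp.supported V k s) : f x = g x := by
  rw [← Finsupp.sum_single x, map_finsuppSum, map_finsuppSum]
  exact Finsupp.sum_congr fun a ha ↦ h a (hx ha) _

attribute [local instance] LieRing.ofAssociativeRing

section BracketDefect

variable {k L V : Type*} [CommRing k] [LieRing L] [LieAlgebra k L] [AddCommGroup V] [Module k V]

/-- The failure `⁅ρ y, ρ z⁆ - ρ ⁅y, z⁆` of a linear map `ρ` to be a representation. -/
def bracketDefect (ρ : L →ₗ[k] Module.End k V) : L →ₗ[k] L →ₗ[k] Module.End k V :=
  LinearMap.mk₂ k (fun y z ↦ ⁅ρ y, ρ z⁆ - ρ ⁅y, z⁆)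
    (fun y y' z ↦ by simp only [map_add, add_lie]; abel)
    (fun a y z ↦ by simp only [map_smul, smul_lie, smul_sub])
    (fun y z z' ↦ by simp only [map_add, lie_add]; abel)
    (fun a y z ↦ by simp only [map_smul, lie_smul, smul_sub])

variable {ρ : L →ₗ[k] Module.End k V}

theorem bracketDefect_apply (y z : L) (v : V) :
    bracketDefect ρ y z v = ρ y (ρ z v) - ρ z (ρ y v) - ρ ⁅y, z⁆ v := rfl

theorem bracketDefect_self (y : L) : bracketDefect ρ y y = 0 := by
  simp [bracketDefect]

theorem bracketDefect_swap (y z : L) : bracketDefect ρ y z = -bracketDefect ρ z y := by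
  simp only [bracketDefect, LinearMap.mk₂_apply, ← lie_skew (ρ y), ← lie_skew y, map_neg]
  abel

theorem bracketDefect_apply_eq_zero_iff {y z : L} {v : V} :
    bracketDefect ρ y z v = 0 ↔ ρ y (ρ z v) = ρ z (ρ y v) + ρ ⁅y, z⁆ v := by
  rw [bracketDefect_apply, sub_sub, sub_eq_zero]

theorem bracketDefect_apply_map_eq_zero {x y z : L} {v : V} (h : ∀ y z, bracketDefect ρ y z v = 0)
    (hy : bracketDefect ρ y x (ρ z v) = 0) (hz : bracketDefect ρ z x (ρ y v) = 0) :
    bracketDefect ρ y z (ρ x v) = 0 := by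
  simp only [bracketDefect_apply_eq_zero_iff] at *
  rw [h z x, h y x, h ⁅y, z⁆ x, lie_lie y z x, map_add, map_add, hy, hz, h y ⁅z, x⁆, h z ⁅y, x⁆,
    h y z, map_add, map_sub, LinearMap.sub_apply]
  abel

end BracketDefect

section Induced

variable {k L M X : Type*} [CommRing k] [LieRing L] [LieAlgebra k L] [AddCommGroup M] [Module k M]
  {L' : LieSubalgebra k L} (b : Module.Basis X k (L ⧸ L'.toSubmodule))

/-- The action on `Sym (L / L') ⊗ M` of the elements of `L`, by multiplication with their image in
`L / L'`. The module `Sym (L / L') ⊗ M` is encoded as `Multiset X →₀ M`: a multiset `s` stands for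
the product of the basis vectors `b i`, `i ∈ s`. -/
noncomputable def symMul : L →ₗ[k] Module.End k (Multiset X →₀ M) :=
  Finsupp.linearCombination k (fun i ↦ Finsupp.lmapDomain M k (i ::ₘ ·)) ∘ₗ quotientCoord b

theorem symMul_single (y : L) (s : Multiset X) (m : M) :
    symMul b y (Finsupp.single s m) =
      (quotientCoord b y).sum fun i a ↦ Finsupp.single (i ::ₘ s) (a • m) := by
  simp [symMul, Finsupp.linearCombination_apply, Finsupp.sum]

theorem symMul_basisLift_single (i : X) (s : Multiset X) (m : M) :
    symMul b (basisLift b i) (Finsupp.single s m) = Finsupp.single (i ::ₘ s) m := by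
  simp [symMul_single]

theorem symMul_basisLift_symMul_single (j : X) (y : L) (s : Multiset X) (m : M) :
    symMul b (basisLift b j) (symMul b y (Finsupp.single s m)) =
      symMul b y (Finsupp.single (j ::ₘ s) m) := by
  simp only [symMul_single b y, map_finsuppSum, symMul_basisLift_single, Multiset.cons_swap j]

theorem symMul_of_mem {y : L} (hy : y ∈ L') : symMul (M := M) b y = 0 := by
  simp [symMul, quotientCoord_of_mem b hy]

variable (k M X) in
/-- The part of `Sym (L / L') ⊗ M` of degree at most `n` in the first factor. -/
noncomputable def degreeLE (n : ℕ) : Submodule k (Multiset X →₀ M) :=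
  Finsupp.supported M k {s | s.card ≤ n}

theorem single_mem_degreeLE {n : ℕ} {s : Multiset X} (hs : s.card ≤ n) (m : M) :
    Finsupp.single s m ∈ degreeLE k M X n :=
  Finsupp.single_mem_supported k m hs

theorem degreeLE_mono {n n' : ℕ} (h : n ≤ n') : degreeLE k M X n ≤ degreeLE k M X n' :=
  Finsupp.supported_mono fun _ hs ↦ le_trans hs h

theorem symMul_mem_degreeLE {n : ℕ} (y : L) {v : Multiset X →₀ M} (hv : v ∈ degreeLE k M X n) :
    symMul b y v ∈ degreeLE k M X (n + 1) := by
  refine map_mem_of_mem_supported (fun s hs m ↦ ?_) hv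
  rw [symMul_single]
  exact Submodule.sum_mem _ fun i _ ↦ single_mem_degreeLE (by simpa using hs) _

theorem symMul_eraseCoords_single_mem_supported [LinearOrder X] {j : X} {t : Multiset X}
    (hj : ∀ i ∈ t, j ≤ i) (y : L) (m : M) :
    symMul b (eraseCoords b (Set.Iic j) y) (Finsupp.single t m) ∈
      Finsupp.supported M k {s : Multiset X | ∀ i ∈ s, j ≤ i} := by
  refine eraseCoords_mem (b := b)
    (P := (Finsupp.supported M k _).comap ((symMul b).flip (Finsupp.single t m)))
    (fun v hv ↦ ?_) (fun i hi ↦ ?_) y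
  · rw [Submodule.mem_comap, LinearMap.flip_apply, symMul_of_mem b hv]
    exact zero_mem _
  · rw [Submodule.mem_comap, LinearMap.flip_apply, symMul_basisLift_single]
    refine Finsupp.single_mem_supported k m ?_
    simpa using ⟨(not_le.1 hi).le, hj⟩

/-- The operators `y ↦ symMul b y + E y`, where the correction `E` is given by its values
`E s y m` on the pure tensors `s ⊗ m`. -/
noncomputable def perturbedMul (E : Multiset X → L →ₗ[k] M →ₗ[k] Multiset X →₀ M) :
    L →ₗ[k] Module.End k (Multiset X →₀ M) :=
  symMul b + (Finsupp.lsum k).toLinearMap ∘ₗ LinearMap.pi E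

theorem perturbedMul_single (E : Multiset X → L →ₗ[k] M →ₗ[k] Multiset X →₀ M) (y : L)
    (s : Multiset X) (m : M) :
    perturbedMul b E y (Finsupp.single s m) = symMul b y (Finsupp.single s m) + E s y m := by
  simp [perturbedMul]

theorem perturbedMul_mem_degreeLE {E : Multiset X → L →ₗ[k] M →ₗ[k] Multiset X →₀ M} {n : ℕ}
    (hE : ∀ s : Multiset X, s.card ≤ n → ∀ y m, E s y m ∈ degreeLE k M X s.card) (y : L)
    {v : Multiset X →₀ M} (hv : v ∈ degreeLE k M X n) :
    perturbedMul b E y v ∈ degreeLE k M X (n + 1) := by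
  refine map_mem_of_mem_supported (fun s hs m ↦ ?_) hv
  rw [perturbedMul_single]
  exact add_mem (symMul_mem_degreeLE b y (single_mem_degreeLE hs m))
    (degreeLE_mono (Nat.le_succ_of_le hs) (hE s hs y m))

theorem perturbedMul_congr {E E' : Multiset X → L →ₗ[k] M →ₗ[k] Multiset X →₀ M} {n : ℕ}
    (h : ∀ s : Multiset X, s.card ≤ n → E s = E' s) (y : L) {v : Multiset X →₀ M}
    (hv : v ∈ degreeLE k M X n) : perturbedMul b E y v = perturbedMul b E' y v := by
  refine map_eq_of_mem_supported (fun s hs m ↦ ?_) hv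
  rw [perturbedMul_single, perturbedMul_single, h s hs]

variable [LinearOrder X] (φ : L' →ₗ[k] Module.End k M)

/-- The value `E s` forced on a correction `E` by its values on smaller multisets, if
`perturbedMul b E` is to be a representation extending `φ` in which the product of the basis
vectors in `s`, taken in increasing order, acts on `0 ⊗ m` by `s ⊗ m`. -/
noncomputable def correctionStep (E : Multiset X → L →ₗ[k] M →ₗ[k] Multiset X →₀ M)
    (s : Multiset X) : L →ₗ[k] M →ₗ[k] Multiset X →₀ M :=
  match s.sort with
  | [] =>
    LinearMap.compRight k (Finsupp.lsingle 0) ∘ₗ φ ∘ₗ basisLiftProj b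
  | j :: t =>
    (LinearMap.compRight k (perturbedMul b E (basisLift b j)) ∘ₗ E (t : Multiset X) -
      LinearMap.lcomp k _ (Finsupp.lsingle (t : Multiset X)) ∘ₗ perturbedMul b E ∘ₗ
        (LieAlgebra.ad k L (basisLift b j))) ∘ₗ eraseCoords b (Set.Iic j)

variable (E : Multiset X → L →ₗ[k] M →ₗ[k] Multiset X →₀ M)

theorem correctionStep_zero (y : L) (m : M) :
    correctionStep b φ E 0 y m =
      Finsupp.single 0 (φ (basisLiftProj b y) m) := by
  simp [correctionStep]

theorem correctionStep_cons {j : X} {t : Multiset X} (hj : ∀ i ∈ t, j ≤ i) (y : L) (m : M) :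
    correctionStep b φ E (j ::ₘ t) y m =
      perturbedMul b E (basisLift b j) (E t (eraseCoords b (Set.Iic j) y) m) +
        perturbedMul b E ⁅eraseCoords b (Set.Iic j) y, basisLift b j⁆ (Finsupp.single t m) := by
  rw [← lie_skew, map_neg]
  simp [correctionStep, Multiset.sort_cons _ _ _ hj, sub_eq_add_neg]

/-- The lower order part `s ⊗ m ↦ correction b φ s y m` of the action of `y` on the induced module.
The recursion only needs the values on multisets of smaller cardinality. -/
noncomputable def correction (s : Multiset X) : L →ₗ[k] M →ₗ[k] Multiset X →₀ M :=
  correctionStep b φ (fun t ↦ if _ : t.card < s.card then correction t else 0) s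
termination_by s.card

theorem exists_correction_eq (s : Multiset X) :
    ∃ E, (∀ t : Multiset X, t.card < s.card → E t = correction b φ t) ∧
      correction b φ s = correctionStep b φ E s :=
  ⟨_, fun _ ht ↦ dif_pos ht, by rw [correction]⟩

theorem correction_zero (y : L) (m : M) :
    correction b φ 0 y m = Finsupp.single 0 (φ (basisLiftProj b y) m) := by
  rw [correction, correctionStep_zero]

theorem correction_mem_degreeLE (s : Multiset X) (y : L) (m : M) :
    correction b φ s y m ∈ degreeLE k M X s.card := by
  induction s using multiset_induction_on_min generalizing y m with
  | zero =>
    rw [correction_zero]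
    exact single_mem_degreeLE le_rfl _
  | cons j t hj ih =>
    obtain ⟨E, hE, hstep⟩ := exists_correction_eq b φ (j ::ₘ t)
    have hE_mem : ∀ u : Multiset X, u.card ≤ t.card → ∀ z m',
        E u z m' ∈ degreeLE k M X u.card := by
      intro u hu z m'
      rw [hE u (by simpa using Nat.lt_succ_of_le hu)]
      exact ih u hu z m'
    rw [hstep, correctionStep_cons b φ E hj, Multiset.card_cons]
    exact add_mem (perturbedMul_mem_degreeLE b hE_mem _ (hE_mem t le_rfl _ m))
      (perturbedMul_mem_degreeLE b hE_mem _ (single_mem_degreeLE le_rfl m))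

/-- The action of `L` on the induced module `U(L) ⊗_{U(L')} M`, which by the
Poincaré-Birkhoff-Witt theorem has `Sym (L / L') ⊗ M` as underlying `k`-module. -/
noncomputable def inducedAction : L →ₗ[k] Module.End k (Multiset X →₀ M) :=
  perturbedMul b (correction b φ)

theorem inducedAction_single (y : L) (s : Multiset X) (m : M) :
    inducedAction b φ y (Finsupp.single s m) =
      symMul b y (Finsupp.single s m) + correction b φ s y m :=
  perturbedMul_single b _ y s m

theorem correction_cons {j : X} {t : Multiset X} (hj : ∀ i ∈ t, j ≤ i) (y : L) (m : M) :
    correction b φ (j ::ₘ t) y m =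
      inducedAction b φ (basisLift b j) (correction b φ t (eraseCoords b (Set.Iic j) y) m) +
        inducedAction b φ ⁅eraseCoords b (Set.Iic j) y, basisLift b j⁆ (Finsupp.single t m) := by
  obtain ⟨E, hE, hstep⟩ := exists_correction_eq b φ (j ::ₘ t)
  replace hE (u : Multiset X) (hu : u.card ≤ t.card) : E u = correction b φ u :=
    hE u (by simpa using Nat.lt_succ_of_le hu)
  rw [hstep, correctionStep_cons b φ E hj, hE t le_rfl,
    perturbedMul_congr b hE _ (correction_mem_degreeLE b φ t _ m),
    perturbedMul_congr b hE _ (single_mem_degreeLE le_rfl m)]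
  rfl

theorem inducedAction_coe_single_zero (y : L') (m : M) :
    inducedAction b φ y (Finsupp.single 0 m) = Finsupp.single 0 (φ y m) := by
  have hy : basisLiftProj b (y : L) = y := basisLiftProj_coe b y
  simp [inducedAction_single, symMul_of_mem b y.2, correction_zero, hy]

theorem correction_basisLift_of_le {j : X} {s : Multiset X} (hj : ∀ i ∈ s, j ≤ i) :
    correction b φ s (basisLift b j) = 0 := by
  ext1 m
  induction s using multiset_induction_on_min with
  | zero => simp [correction_zero, basisLiftProj_basisLift]
  | cons i t hi =>
    have h : eraseCoords b (Set.Iic i) (basisLift b j) = 0 :=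
      eraseCoords_basisLift_of_mem (hj i (Multiset.mem_cons_self i t))
    simp [correction_cons b φ hi, h]

theorem inducedAction_basisLift_single {j : X} {s : Multiset X} (hj : ∀ i ∈ s, j ≤ i) (m : M) :
    inducedAction b φ (basisLift b j) (Finsupp.single s m) = Finsupp.single (j ::ₘ s) m := by
  rw [inducedAction_single, symMul_basisLift_single, correction_basisLift_of_le b φ hj,
    LinearMap.zero_apply, add_zero]

theorem inducedAction_basisLift_of_mem_supported {j : X} {v : Multiset X →₀ M}
    (hv : v ∈ Finsupp.supported M k {s : Multiset X | ∀ i ∈ s, j ≤ i}) :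
    inducedAction b φ (basisLift b j) v = symMul b (basisLift b j) v :=
  map_eq_of_mem_supported (fun s hs m ↦ by
    rw [inducedAction_basisLift_single b φ hs, symMul_basisLift_single]) hv

theorem bracketDefect_inducedAction_eraseCoords {j : X} {t : Multiset X} (hj : ∀ i ∈ t, j ≤ i)
    (y : L) (m : M) :
    bracketDefect (inducedAction b φ) (eraseCoords b (Set.Iic j) y) (basisLift b j)
      (Finsupp.single t m) = 0 := by
  have hlead : inducedAction b φ (basisLift b j)
      (symMul b (eraseCoords b (Set.Iic j) y) (Finsupp.single t m)) =
        symMul b (eraseCoords b (Set.Iic j) y) (Finsupp.single (j ::ₘ t) m) := by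
    rw [inducedAction_basisLift_of_mem_supported b φ
      (symMul_eraseCoords_single_mem_supported b hj y m), symMul_basisLift_symMul_single]
  rw [bracketDefect_apply_eq_zero_iff, inducedAction_basisLift_single b φ hj,
    inducedAction_single, correction_cons b φ hj, eraseCoords_eraseCoords,
    inducedAction_single b φ (eraseCoords b (Set.Iic j) y) t, map_add, hlead, add_assoc]

theorem bracketDefect_inducedAction_basisLift {j : X} {t : Multiset X} (hj : ∀ i ∈ t, j ≤ i)
    (y : L) (m : M) :
    bracketDefect (inducedAction b φ) y (basisLift b j) (Finsupp.single t m) = 0 := by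
  rw [← bracketDefect_inducedAction_eraseCoords b φ hj y m]
  refine (map_eraseCoords (f := LinearMap.applyₗ (Finsupp.single t m) ∘ₗ
    (bracketDefect (inducedAction b φ)).flip (basisLift b j)) (fun i hi ↦ ?_) y).symm
  rcases (Set.mem_Iic.1 hi).eq_or_lt with rfl | hij
  · simp [bracketDefect_self]
  · have h := bracketDefect_inducedAction_eraseCoords b φ
      (fun a ha ↦ hij.le.trans (hj a ha)) (basisLift b j) m
    rw [eraseCoords_basisLift_of_notMem (Set.notMem_Iic.2 hij)] at h
    simp [bracketDefect_swap (basisLift b i), h]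

theorem bracketDefect_inducedAction_eraseCoords₂ {S : Set X} {s : Multiset X}
    (hS : ∀ j ∈ S, ∀ i ∈ s, j ≤ i) (y z : L) (m : M) :
    bracketDefect (inducedAction b φ) (eraseCoords b S y) (eraseCoords b S z)
      (Finsupp.single s m) = bracketDefect (inducedAction b φ) y z (Finsupp.single s m) := by
  have erase_right (y z : L) :
      bracketDefect (inducedAction b φ) y (eraseCoords b S z) (Finsupp.single s m) =
        bracketDefect (inducedAction b φ) y z (Finsupp.single s m) :=
    map_eraseCoords (f := LinearMap.applyₗ (Finsupp.single s m) ∘ₗ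
      bracketDefect (inducedAction b φ) y)
      (fun j hj ↦ bracketDefect_inducedAction_basisLift b φ (hS j hj) y m) z
  rw [erase_right, bracketDefect_swap, LinearMap.neg_apply, erase_right, ← LinearMap.neg_apply,
    ← bracketDefect_swap]

theorem bracketDefect_inducedAction_single_cons {j : X} {t : Multiset X} (hj : ∀ i ∈ t, j ≤ i)
    (ih : ∀ u : Multiset X, u.card ≤ t.card → ∀ y z m,
      bracketDefect (inducedAction b φ) y z (Finsupp.single u m) = 0) (y z : L) (m : M) :
    bracketDefect (inducedAction b φ) y z (Finsupp.single (j ::ₘ t) m) = 0 := by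
  have hlead (y z : L) : bracketDefect (inducedAction b φ) y (basisLift b j)
      (symMul b (eraseCoords b (Set.Iic j) z) (Finsupp.single t m)) = 0 :=
    map_eq_of_mem_supported (g := 0)
      (fun s hs m' ↦ bracketDefect_inducedAction_basisLift b φ hs y m')
      (symMul_eraseCoords_single_mem_supported b hj z m)
  have hlower (y z : L) : bracketDefect (inducedAction b φ) y (basisLift b j)
      (correction b φ t z m) = 0 :=
    map_eq_of_mem_supported (g := 0) (fun u hu m' ↦ ih u hu y _ m')
      (correction_mem_degreeLE b φ t z m)
  have hmoved (y z : L) : bracketDefect (inducedAction b φ) y (basisLift b j)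
      (inducedAction b φ (eraseCoords b (Set.Iic j) z) (Finsupp.single t m)) = 0 := by
    rw [inducedAction_single, map_add, hlead, hlower, add_zero]
  have hS : ∀ i ∈ Set.Iic j, ∀ i' ∈ j ::ₘ t, i ≤ i' := by
    intro i hi i' hi'
    rcases Multiset.mem_cons.1 hi' with rfl | hi'
    exacts [hi, hi.trans (hj i' hi')]
  rw [← bracketDefect_inducedAction_eraseCoords₂ b φ hS,
    ← inducedAction_basisLift_single b φ hj]
  exact bracketDefect_apply_map_eq_zero (fun y z ↦ ih t le_rfl y z m) (hmoved _ _) (hmoved _ _)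

variable {φ}

theorem bracketDefect_inducedAction_single_zero (hφ : ∀ y z, φ ⁅y, z⁆ = ⁅φ y, φ z⁆) (y z : L)
    (m : M) :
    bracketDefect (inducedAction b φ) y z (Finsupp.single 0 m) = 0 := by
  rw [← bracketDefect_inducedAction_eraseCoords₂ b φ (S := Set.univ) (by simp)]
  lift eraseCoords b Set.univ y to L' using eraseCoords_univ_mem b y with y
  lift eraseCoords b Set.univ z to L' using eraseCoords_univ_mem b z with z
  rw [bracketDefect_apply, ← LieSubalgebra.coe_bracket]
  simp only [inducedAction_coe_single_zero, hφ, LieRing.of_associative_ring_bracket,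
    LinearMap.sub_apply, Module.End.mul_apply, Finsupp.single_sub, sub_self]

theorem bracketDefect_inducedAction_eq_zero (hφ : ∀ y z, φ ⁅y, z⁆ = ⁅φ y, φ z⁆) (y z : L) :
    bracketDefect (inducedAction b φ) y z = 0 := by
  ext1 s
  ext1 m
  induction s using multiset_induction_on_min generalizing y z m with
  | zero => exact bracketDefect_inducedAction_single_zero b hφ y z m
  | cons j t hj ih => exact bracketDefect_inducedAction_single_cons b φ hj ih y z m

/-- The representation of `L` induced by a representation of `L'`. -/
noncomputable def inducedRep (φ : L' →ₗ⁅k⁆ Module.End k M) :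
    L →ₗ⁅k⁆ Module.End k (Multiset X →₀ M) where
  __ := inducedAction b (φ : L' →ₗ[k] Module.End k M)
  map_lie' {y z} := by
    have h := bracketDefect_inducedAction_eq_zero b φ.map_lie y z
    exact (sub_eq_zero.1 h).symm

theorem inducedRep_coe_single_zero (φ : L' →ₗ⁅k⁆ Module.End k M) (y : L') (m : M) :
    inducedRep b φ y (Finsupp.single 0 m) = Finsupp.single 0 (φ y m) :=
  inducedAction_coe_single_zero b _ y m

end Induced

section Enveloping

open UniversalEnvelopingAlgebra

variable {k L : Type*} [CommRing k] [LieRing L] [LieAlgebra k L]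

theorem envelopingAlgebra_adjoin_range_ι :
    Algebra.adjoin k (Set.range (ι k : L → UniversalEnvelopingAlgebra k L)) = ⊤ := by
  have hsurj : Function.Surjective (mkAlgHom k L) := RingCon.mkₐ_surjective _
  rw [← (AlgHom.range_eq_top (mkAlgHom k L)).2 hsurj, ← Algebra.map_top,
    ← TensorAlgebra.adjoin_range_ι, AlgHom.map_adjoin, ← Set.range_comp]
  rfl

/-- The homomorphism `U(L') → U(L)` extending the inclusion of a Lie subalgebra `L'` of `L`. -/
noncomputable def envelopingInclusion (L' : LieSubalgebra k L) :
    UniversalEnvelopingAlgebra k L' →ₐ[k] UniversalEnvelopingAlgebra k L :=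
  lift k ((ι k).comp L'.incl)

theorem lift_inducedRep_single_zero {M X : Type*} [AddCommGroup M] [Module k M] [LinearOrder X]
    {L' : LieSubalgebra k L} (b : Module.Basis X k (L ⧸ L'.toSubmodule))
    (φ : L' →ₗ⁅k⁆ Module.End k M) (u : UniversalEnvelopingAlgebra k L') (m : M) :
    lift k (inducedRep b φ) (envelopingInclusion L' u) (Finsupp.single 0 m) =
      Finsupp.single 0 (lift k φ u m) := by
  have hu : u ∈ Algebra.adjoin k (Set.range (ι k : L' → UniversalEnvelopingAlgebra k L')) :=
    envelopingAlgebra_adjoin_range_ι (k := k) (L := L') ▸ Algebra.mem_top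
  induction hu using Algebra.adjoin_induction generalizing m with
  | mem _ hx =>
    obtain ⟨x, rfl⟩ := hx
    simp only [envelopingInclusion, lift_ι_apply, LieHom.comp_apply]
    exact inducedRep_coe_single_zero b φ x m
  | algebraMap a => simp [Algebra.algebraMap_eq_smul_one]
  | add u v _ _ hu hv => simp [hu, hv]
  | mul u v _ _ hu hv => simp [hu, hv]

theorem exists_injective_semilinearMap_envelopingInclusion.{u, v} {L : Type u} [LieRing L]
    [LieAlgebra k L] (L' : LieSubalgebra k L) [Module.Free k (L ⧸ L'.toSubmodule)] (M : Type v)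
    [AddCommGroup M] [Module k M] [Module (UniversalEnvelopingAlgebra k L') M]
    [IsScalarTower k (UniversalEnvelopingAlgebra k L') M] :
    ∃ (N : Type max u v) (_ : AddCommGroup N) (_ : Module (UniversalEnvelopingAlgebra k L) N)
      (g : M →ₛₗ[(envelopingInclusion L').toRingHom] N), Function.Injective g := by
  let X := Module.Free.ChooseBasisIndex k (L ⧸ L'.toSubmodule)
  let _ : LinearOrder X := IsWellOrder.linearOrder WellOrderingRel
  let action : UniversalEnvelopingAlgebra k L' →ₐ[k] Module.End k M := Algebra.lsmul k k M
  let φ : L' →ₗ⁅k⁆ Module.End k M := action.toLieHom.comp (ι k)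
  have hφ : lift k φ = action := by
    ext x
    simp [φ]
  let b := Module.Free.chooseBasis k (L ⧸ L'.toSubmodule)
  let _ : Module (UniversalEnvelopingAlgebra k L) (Multiset X →₀ M) :=
    Module.compHom _ (lift k (inducedRep b φ)).toRingHom
  have hsmul (u : UniversalEnvelopingAlgebra k L') (m : M) :
      Finsupp.single (0 : Multiset X) (u • m) =
        (envelopingInclusion L').toRingHom u • Finsupp.single 0 m := by
    refine Eq.trans ?_ (lift_inducedRep_single_zero b φ u m).symm
    rw [hφ]
    rfl
  exact ⟨Multiset X →₀ M, inferInstance, inferInstance,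
    { toFun := Finsupp.single 0
      map_add' := Finsupp.single_add 0
      map_smul' := hsmul }, Finsupp.single_injective 0⟩

variable (k L)

/-- The antipode of the enveloping algebra, as a map to the opposite algebra. -/
noncomputable def envelopingAntipode :
    UniversalEnvelopingAlgebra k L →ₐ[k] (UniversalEnvelopingAlgebra k L)ᵐᵒᵖ :=
  lift k
    { toFun x := MulOpposite.op (-ι k x)
      map_add' x y := by simp [add_comm]
      map_smul' a x := by simp
      map_lie' {x y} := MulOpposite.unop_injective (by
        simp [LieRing.of_associative_ring_bracket]) }

theorem envelopingAntipode_surjective : Function.Surjective (envelopingAntipode k L) := by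
  have hinv : (AlgHom.op (envelopingAntipode k L)).comp (envelopingAntipode k L) =
      (AlgEquiv.opOp k (UniversalEnvelopingAlgebra k L)).toAlgHom := by
    ext x
    simp [envelopingAntipode]
  exact fun u ↦ ⟨(envelopingAntipode k L u.unop).unop,
    MulOpposite.op_injective (AlgHom.congr_fun hinv u.unop)⟩

end Enveloping

theorem enveloping_noetherian_of_lieSubalgebra_general {k L : Type*} [CommRing k] [LieRing L]
    [LieAlgebra k L] (L' : LieSubalgebra k L) [Module.Free k (L ⧸ L'.toSubmodule)]
    (hl : IsNoetherianRing (UniversalEnvelopingAlgebra k L)) :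
    IsNoetherianRing (UniversalEnvelopingAlgebra k L') ∧
      IsNoetherianRing (UniversalEnvelopingAlgebra k L')ᵐᵒᵖ := by
  have hcontract (I : Ideal (UniversalEnvelopingAlgebra k L')) :
      (I.map (envelopingInclusion L').toRingHom).comap (envelopingInclusion L').toRingHom = I := by
    obtain ⟨N, _, _, g, hg⟩ := exists_injective_semilinearMap_envelopingInclusion L'
      (UniversalEnvelopingAlgebra k L' ⧸ I)
    exact comap_map_eq_of_injective_semilinear hg
  have hleft := isNoetherianRing_of_comap_map_eq hcontract
  have hright := isNoetherianRing_of_surjective _ _ (envelopingAntipode k L').toRingHom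
    (envelopingAntipode_surjective k L')
  exact ⟨hleft, hright⟩

/-!
Statement 5: If `L'` is a Lie subalgebra of a Lie algebra `L` over a field `k` of
characteristic 0 and `U(L)` is (left and right) noetherian, then `U(L')` is (left and right)
noetherian.  Right noetherianity of `A` is expressed as left noetherianity of `Aᵐᵒᵖ`.
-/

theorem enveloping_noetherian_of_lieSubalgebra (k : Type*) (L : Type*) [Field k] [CharZero k]
    [LieRing L] [LieAlgebra k L] (L' : LieSubalgebra k L)
    (hl : IsNoetherianRing (UniversalEnvelopingAlgebra k L))
    (hr : IsNoetherianRing (UniversalEnvelopingAlgebra k L)ᵐᵒᵖ) :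
    IsNoetherianRing (UniversalEnvelopingAlgebra k L') ∧
      IsNoetherianRing (UniversalEnvelopingAlgebra k L')ᵐᵒᵖ :=
  enveloping_noetherian_of_lieSubalgebra_general L' hl
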